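/- For all integers k, m ≥ 0, the function u(t,r,η) = e^{−4(k(k+m+7)+2m)t} (cos r)^m P_k^{3,m+3}(cos 2r) h_m(η) satisfies, for all t > 0, r ∈ (0,π/2), η ∈ (0,π), the heat equation ∂u/∂t = ∂²u/∂r² + (7·cot r − 7·tan r)·∂u/∂r + tan²r·(∂²u/∂η² + 6·cot η·∂u/∂η). In other words, (cos r)^m P_k^{3,m+3}(cos 2r) h_m(η) is an eigenfunction of the radial part of the sub-Laplacian of the octonionic Hopf fibration with eigenvalue −4(k(k+m+7)+2m). -/

import Mathlib

open Real MeasureTheory Filter Topology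

/-- Jacobi polynomial `P_k^{3,b}` (with `b = m+3` octonionic, `b = m+1` quaternionic),
given by the polynomial extension of the Rodrigues formula. -/
noncomputable def jacP (k b : ℕ) : Polynomial ℝ :=
  Polynomial.C ((-1 : ℝ) ^ k / (2 ^ k * (Nat.factorial k : ℝ))) *
    (Polynomial.derivative^[k]
        ((1 - Polynomial.X) ^ (k + 3) * (1 + Polynomial.X) ^ (b + k)) /
      ((1 - Polynomial.X) ^ 3 * (1 + Polynomial.X) ^ b))

/-- Normalized eigenfunction `h_m` of the radial Laplacian on `S^7`. -/
noncomputable def hOct (m : ℕ) (η : ℝ) : ℝ :=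
  (Real.Gamma (7 / 2) / (Real.sqrt π * Real.Gamma 3)) *
    ∫ φ in (0 : ℝ)..π,
      (((Real.cos η : ℂ) + Complex.I * ((Real.sin η * Real.cos φ : ℝ) : ℂ)) ^ m).re *
        (Real.sin φ) ^ 5

/-- Coefficient `α_{k,m}`. -/
noncomputable def alphOct (k m : ℕ) : ℝ :=
  (96 / π ^ 8) * (m + 3) * (2 * k + m + 7) *
    (Nat.choose (k + m + 6) (k + m + 3)) * (Nat.choose (m + 5) m)

/-- Subelliptic heat kernel of the octonionic Hopf fibration, in cylindric coordinates. -/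
noncomputable def pOct (t r η : ℝ) : ℝ :=
  ∑' m : ℕ, ∑' k : ℕ,
    alphOct k m * hOct m η * Real.exp (-(4 * ((k * (k + m + 7) + 2 * m : ℕ) : ℝ)) * t) *
      (Real.cos r) ^ m * (jacP k (m + 3)).eval (Real.cos (2 * r))

/-- Coefficient `β_{k,m}` of the quaternionic heat kernel. -/
noncomputable def betQ (k m : ℕ) : ℝ :=
  (Real.Gamma 4 / (2 * π ^ 6)) * (2 * k + m + 5) * (m + 1) *
    (Nat.choose (k + m + 4) (k + m + 1))

/-- Subelliptic heat kernel of the quaternionic Hopf fibration on `S^11`. -/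
noncomputable def pQuat (t r η : ℝ) : ℝ :=
  ∑' m : ℕ, ∑' k : ℕ,
    betQ k m * Real.exp (-(4 * ((k * (k + m + 5) + 2 * m : ℕ) : ℝ)) * t) *
      (Real.sin ((m + 1) * η) / Real.sin η) *
      (Real.cos r) ^ m * (jacP k (m + 1)).eval (Real.cos (2 * r))

/-- Gegenbauer polynomial `C_m^5` (polynomial extension to all real `x`). -/
noncomputable def geg5 (m : ℕ) (x : ℝ) : ℝ :=
  ∑ j ∈ Finset.range (m / 2 + 1),
    (-1 : ℝ) ^ j * (Nat.factorial (m - j + 4)) /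
      ((Nat.factorial 4) * (Nat.factorial j) * (Nat.factorial (m - 2 * j))) * (2 * x) ^ (m - 2 * j)

/-- Radial heat kernel of the round sphere `S^11`, as a function of `cos δ`. -/
noncomputable def qS11 (t x : ℝ) : ℝ :=
  (Real.Gamma 5 / (2 * π ^ 6)) *
    ∑' m : ℕ, (m + 5) * Real.exp (-((m * (m + 10) : ℕ) : ℝ) * t) * geg5 m x

/-- The kernel `g_t(η,y)` appearing in the integral representation. -/
noncomputable def gInt (t η y : ℝ) : ℝ :=
  (Real.sin η)⁻¹ ^ 3 *
    (Real.cos (η * y / (2 * t)) * (2 * y) * (η - 3 * t * Real.cot η) +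
      Real.sin (η * y / (2 * t)) *
        (8 * t ^ 2 * Real.cot η ^ 2 + 4 * t ^ 2 * ((Real.sin η)⁻¹) ^ 2 -
          6 * t * η * Real.cot η + 2 * t + η ^ 2 - y ^ 2))

/-- Theta-type function `V(t,δ)`. -/
noncomputable def Vtheta (t δ : ℝ) : ℝ :=
  (1 / Real.sqrt (4 * π * t)) * ∑' k : ℤ, Real.exp (-(δ - 2 * k * π) ^ 2 / (4 * t))

/-- The operator `f ↦ -(1/(2π sin δ)) f'`. -/
noncomputable def Dop (f : ℝ → ℝ) : ℝ → ℝ :=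
  fun δ => -(1 / (2 * π * Real.sin δ)) * deriv f δ


/-- The separated function `u(t,r,η) = e^{-4(k(k+m+7)+2m)t} (cos r)^m P_k^{3,m+3}(cos 2r) h_m(η)`. -/
noncomputable def uEig (k m : ℕ) (t r η : ℝ) : ℝ :=
  Real.exp (-(4 * ((k * (k + m + 7) + 2 * m : ℕ) : ℝ)) * t) * (Real.cos r) ^ m *
    (jacP k (m + 3)).eval (Real.cos (2 * r)) * hOct m η

/-!
Separation of variables reduces the heat equation to one ordinary differential equation in `r` and
one in `η`.

Write `p = 1 - X ^ 2`, and let `w = (1 - X) ^ a * (1 + X) ^ b` be the Jacobi weight. It solves the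
Pearson equation `p * w' = s * w` with `s` linear, hence so does `p ^ k * w` with another linear
factor. Differentiating that equation `k + 1` times and substituting the Rodrigues formula
`(p ^ k * w)^(k) = w * y` yields the Jacobi equation for `y`. In the variable `cos (2 * r)` this is
a radial Laplace equation, and multiplying the solution by `cos r ^ m` lowers the Jacobi parameter
by `m` at the cost of the potential `m * (m + 2 * b) * tan r ^ 2`.

That potential is compensated by the fibre. Put `z = cos η + i * sin η * cos φ`. For a polynomial
`Q`, the radial Laplacian on the sphere of dimension `n + 2` applied to `∫ Q(z) * sin φ ^ n` differs
from `-∫ (z ^ 2 * Q''(z) + (n + 2) * z * Q'(z)) * sin φ ^ n` by the integral of the exact derivative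
`∂/∂φ (i / sin η * Q'(z) * sin φ ^ (n + 1))`, whose integral over `[0, π]` vanishes. The monomial
`Q = X ^ m` is an eigenvector of the Euler operator `X ^ 2 * Q'' + (n + 2) * X * Q'` with eigenvalue
`m * (m + n + 1)`.
-/

lemma two_mul_cast_choose_two (R : Type*) [CommSemiring R] (n : ℕ) :
    2 * ((n + 1).choose 2 : R) = n * (n + 1) := by
  have h := Nat.add_one_mul_choose_eq n 1
  rw [Nat.choose_one_right] at h
  exact_mod_cast congrArg (Nat.cast (R := R)) (by linarith : 2 * (n + 1).choose 2 = n * (n + 1))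

section Rodrigues

open Polynomial

variable {R : Type*} [CommRing R] {p s w : R[X]}

lemma pow_mul_dvd_iterate_derivative_of_pearson (hw : p * derivative w = s * w) (n k : ℕ)
    (v : R[X]) : p ^ n * w ∣ derivative^[k] (p ^ (n + k) * w * v) := by
  induction k generalizing v with
  | zero => exact dvd_mul_right _ _
  | succ k ih =>
    have hder : derivative (p ^ (n + (k + 1)) * w * v) =
        p ^ (n + k) * w * (((n + k + 1 : ℕ) : R[X]) * derivative p * v + s * v
          + p * derivative v) := by
      simp only [derivative_mul, ← add_assoc, derivative_pow_succ, map_add,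
        map_natCast, map_one]
      push_cast
      linear_combination p ^ (n + k) * v * hw
    rw [Function.iterate_succ_apply, hder]
    exact ih _

lemma pearson_pow_mul (hw : p * derivative w = s * w) (k : ℕ) :
    p * derivative (p ^ k * w) = (k * derivative p + s) * (p ^ k * w) := by
  rw [derivative_mul, derivative_pow]
  cases k with
  | zero => simp [hw]
  | succ k =>
    simp only [map_natCast, Nat.add_sub_cancel]
    linear_combination p ^ (k + 1) * hw

lemma iterate_derivative_of_pearson (hp : derivative^[3] p = 0) (hs : derivative^[2] s = 0)
    (hw : p * derivative w = s * w) (n : ℕ) :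
    p * derivative^[n + 2] w + ((n + 1) * derivative p - s) * derivative^[n + 1] w
      + ((n + 1).choose 2 * derivative^[2] p - (n + 1) * derivative s) * derivative^[n] w = 0 := by
  simp only [Function.iterate_succ_apply', Function.iterate_zero_apply] at hp hs ⊢
  induction n with
  | zero =>
    have h := congrArg derivative hw
    simp only [derivative_mul] at h
    simp only [Function.iterate_zero, id_eq, Nat.cast_zero, zero_add, one_mul,
      Nat.choose_succ_self, zero_mul]
    linear_combination h
  | succ n ih =>
    have h := congrArg derivative ih
    simp only [derivative_add, derivative_sub, derivative_mul, derivative_natCast,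
      derivative_one, derivative_zero, hp, hs] at h
    have hchoose : ((n + 1 + 1).choose 2 : R[X]) = (n + 1) + (n + 1).choose 2 := by
      rw [Nat.choose_succ_succ' (n + 1) 1, Nat.choose_one_right]
      push_cast
      ring
    rw [hchoose]
    push_cast
    simp only [Function.iterate_succ_apply']
    linear_combination h

theorem rodrigues_ode [NoZeroDivisors R] {y : R[X]} {k : ℕ} (hp : derivative^[3] p = 0)
    (hs : derivative^[2] s = 0) (hw : p * derivative w = s * w) (hw0 : w ≠ 0)
    (hy : derivative^[k] (p ^ k * w) = w * y) :
    p * derivative^[2] y + (s + derivative p) * derivative y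
      = (k * derivative s + (k + 1).choose 2 * derivative^[2] p) * y := by
  have hs' : derivative^[2] (k * derivative p + s : R[X]) = 0 := by
    simp only [Function.iterate_succ_apply', Function.iterate_zero_apply] at hp hs ⊢
    simp [hp, hs]
  have hdw := congrArg derivative hw
  have hder := iterate_derivative_of_pearson hp hs' (pearson_pow_mul hw k) k
  simp only [Function.iterate_succ_apply', Function.iterate_zero_apply, hy, derivative_add,
    derivative_mul, derivative_natCast, zero_mul, zero_add] at hder hdw ⊢
  refine mul_left_cancel₀ hw0 ?_
  linear_combination hder - 2 * derivative y * hw - y * hdw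
    - w * derivative (derivative p) * y * two_mul_cast_choose_two R[X] k

end Rodrigues

section Jacobi

open Polynomial

variable (K : Type*) [Field K]

/-- The Jacobi weight `(1 - x)^a (1 + x)^b`, as a polynomial. -/
noncomputable def jacobiWeight (a b : ℕ) : K[X] := (1 - X) ^ a * (1 + X) ^ b

/-- The Jacobi polynomial `P_k^{a,b}` given by the Rodrigues formula. The polynomial division is
exact; the normalization is meaningful when `2 ^ k * k !` is invertible in `K`, and `jacobiPoly` is
zero otherwise. -/
noncomputable def jacobiPoly (k a b : ℕ) : K[X] :=
  C ((-1 : K) ^ k / (2 ^ k * (k.factorial : K))) *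
    (derivative^[k] ((1 - X) ^ (k + a) * (1 + X) ^ (b + k)) / jacobiWeight K a b)

variable {K}

lemma jacobiWeight_ne_zero (a b : ℕ) : jacobiWeight K a b ≠ 0 := by
  have hsub : (1 - X : K[X]) ≠ 0 := fun h => by simpa using congrArg (eval 0) h
  have hadd : (1 + X : K[X]) ≠ 0 := fun h => by simpa using congrArg (eval 0) h
  exact mul_ne_zero (pow_ne_zero _ hsub) (pow_ne_zero _ hadd)

lemma jacobiWeight_pearson (a b : ℕ) :
    (1 - X ^ 2) * derivative (jacobiWeight K a b)
      = (C (b - a : K) - C (a + b : K) * X) * jacobiWeight K a b := by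
  have hsub : (1 - X) * derivative ((1 - X : K[X]) ^ a) = -(a : K[X]) * (1 - X) ^ a := by
    cases a with
    | zero => simp
    | succ a => simp only [derivative_pow_succ, derivative_sub, derivative_one, derivative_X,
        map_add, map_natCast, map_one, Nat.cast_succ]; ring
  have hadd : (1 + X) * derivative ((1 + X : K[X]) ^ b) = (b : K[X]) * (1 + X) ^ b := by
    cases b with
    | zero => simp
    | succ b => simp only [derivative_pow_succ, derivative_one, derivative_X,
        map_add, map_natCast, map_one, Nat.cast_succ]; ring
  rw [jacobiWeight, derivative_mul]
  simp only [map_sub, map_add, map_natCast]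
  linear_combination (1 + X) ^ (b + 1) * hsub + (1 - X) ^ (a + 1) * hadd

theorem jacobiPoly_ode (k a b : ℕ) :
    (1 - X ^ 2) * derivative^[2] (jacobiPoly K k a b)
        + (C (b - a : K) - C (a + b + 2 : K) * X) * derivative (jacobiPoly K k a b)
      = -C (k * (k + a + b + 1) : K) * jacobiPoly K k a b := by
  have hpow : (1 - X ^ 2) ^ k * jacobiWeight K a b = (1 - X) ^ (k + a) * (1 + X) ^ (b + k) := by
    rw [jacobiWeight, show (1 - X ^ 2 : K[X]) = (1 - X) * (1 + X) by ring, mul_pow]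
    ring
  obtain ⟨y, hy⟩ : jacobiWeight K a b ∣ derivative^[k] ((1 - X ^ 2) ^ k * jacobiWeight K a b) := by
    simpa using pow_mul_dvd_iterate_derivative_of_pearson (jacobiWeight_pearson a b) 0 k 1
  have hp : derivative (1 - X ^ 2 : K[X]) = -2 * X := by
    simp only [derivative_sub, derivative_one, derivative_X_sq, C_ofNat]
    ring
  have hp₂ : derivative^[2] (1 - X ^ 2 : K[X]) = -2 := by
    rw [Function.iterate_succ_apply, hp]
    simp
  have hs : derivative (C (b - a : K) - C (a + b : K) * X) = -C (a + b : K) := by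
    simp only [derivative_sub, derivative_C, derivative_C_mul_X, zero_sub]
  have hode := rodrigues_ode (by simp) (by simp) (jacobiWeight_pearson a b)
    (jacobiWeight_ne_zero a b) hy
  rw [hp, hp₂, hs] at hode
  rw [jacobiPoly, ← hpow, hy, mul_div_cancel_left₀ _ (jacobiWeight_ne_zero a b),
    iterate_derivative_C_mul, derivative_C_mul]
  simp only [map_sub, map_add, map_mul, map_natCast, map_one, map_ofNat] at hode ⊢
  linear_combination C ((-1 : K) ^ k / (2 ^ k * (k.factorial : K))) *
    (hode - y * two_mul_cast_choose_two K[X] k)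

end Jacobi

lemma jacP_eq_jacobiPoly (k b : ℕ) : jacP k b = jacobiPoly ℝ k 3 b := rfl

section Radial

variable {a b r : ℝ}

lemma hasDerivAt_cos_pow (m : ℕ) (hc : cos r ≠ 0) :
    HasDerivAt (fun ρ => cos ρ ^ m) (-(m * tan r) * cos r ^ m) r := by
  refine ((hasDerivAt_cos r).pow m).congr_deriv ?_
  rw [tan_eq_sin_div_cos]
  cases m with
  | zero => simp
  | succ m => simp only [Nat.add_sub_cancel]; field_simp; ring

lemma radial_laplacian_cos_pow_mul {g : ℝ → ℝ} (hg : ContDiff ℝ 2 g) (m : ℕ) (hs : sin r ≠ 0)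
    (hc : cos r ≠ 0) :
    deriv (deriv fun ρ => cos ρ ^ m * g ρ) r
        + ((2 * a + 1) * cot r - (2 * b + 1) * tan r) * deriv (fun ρ => cos ρ ^ m * g ρ) r
        - m * (m + 2 * b) * tan r ^ 2 * (cos r ^ m * g r)
      = cos r ^ m * (deriv (deriv g) r
          + ((2 * a + 1) * cot r - (2 * (m + b) + 1) * tan r) * deriv g r
          - 2 * (a + 1) * m * g r) := by
  have hg₁ (ρ : ℝ) : HasDerivAt g (deriv g ρ) ρ :=
    (hg.differentiable (by norm_num)).differentiableAt.hasDerivAt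
  have hg₂ : HasDerivAt (deriv g) (deriv (deriv g) r) r :=
    hg.differentiable_deriv_two.differentiableAt.hasDerivAt
  have hderiv {ρ : ℝ} (hρ : cos ρ ≠ 0) :
      HasDerivAt (fun ρ => cos ρ ^ m * g ρ) (cos ρ ^ m * (deriv g ρ - m * tan ρ * g ρ)) ρ :=
    ((hasDerivAt_cos_pow m hρ).mul (hg₁ ρ)).congr_deriv (by ring)
  have heq : deriv (fun ρ => cos ρ ^ m * g ρ)
      =ᶠ[𝓝 r] fun ρ => cos ρ ^ m * (deriv g ρ - m * tan ρ * g ρ) := by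
    filter_upwards [continuous_cos.continuousAt.eventually_ne hc] with ρ hρ using (hderiv hρ).deriv
  have hsec : 1 / cos r ^ 2 = 1 + tan r ^ 2 := by
    rw [tan_eq_sin_div_cos]
    field_simp
    rw [cos_sq_add_sin_sq]
  have hcot : cot r * tan r = 1 := by
    rw [cot_eq_cos_div_sin, tan_eq_sin_div_cos]
    field_simp
  have hderiv₂ : HasDerivAt (fun ρ => cos ρ ^ m * (deriv g ρ - m * tan ρ * g ρ))
      (-(m * tan r) * cos r ^ m * (deriv g r - m * tan r * g r)
        + cos r ^ m * (deriv (deriv g) r - (m * (1 / cos r ^ 2) * g r + m * tan r * deriv g r)))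
      r :=
    (hasDerivAt_cos_pow m hc).mul (hg₂.sub (((hasDerivAt_tan hc).const_mul _).mul (hg₁ r)))
  rw [heq.deriv_eq, (hderiv hc).deriv, hderiv₂.deriv, hsec]
  linear_combination -(2 * a + 1) * m * cos r ^ m * g r * hcot

lemma radial_laplacian_comp_cos_two_mul {y : ℝ → ℝ} (hy : ContDiff ℝ 2 y) (hs : sin r ≠ 0)
    (hc : cos r ≠ 0) :
    deriv (deriv fun ρ => y (cos (2 * ρ))) r
        + ((2 * a + 1) * cot r - (2 * b + 1) * tan r) * deriv (fun ρ => y (cos (2 * ρ))) r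
      = 4 * ((1 - cos (2 * r) ^ 2) * deriv (deriv y) (cos (2 * r))
          + (b - a - (a + b + 2) * cos (2 * r)) * deriv y (cos (2 * r))) := by
  have htwo (ρ : ℝ) : HasDerivAt (fun ρ => 2 * ρ) 2 ρ := by
    simpa using (hasDerivAt_id ρ).const_mul 2
  have hcomp {z : ℝ → ℝ} (hz : Differentiable ℝ z) (ρ : ℝ) :
      HasDerivAt (fun ρ => z (cos (2 * ρ))) (deriv z (cos (2 * ρ)) * (-sin (2 * ρ) * 2)) ρ :=
    (hz _).hasDerivAt.comp ρ (htwo ρ).cos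
  have hderiv : deriv (fun ρ => y (cos (2 * ρ)))
      = fun ρ => deriv y (cos (2 * ρ)) * (-sin (2 * ρ) * 2) :=
    funext fun ρ => (hcomp (hy.differentiable (by norm_num)) ρ).deriv
  have hderiv₂ : HasDerivAt (fun ρ => deriv y (cos (2 * ρ)) * (-sin (2 * ρ) * 2))
      (deriv (deriv y) (cos (2 * r)) * (-sin (2 * r) * 2) * (-sin (2 * r) * 2)
        + deriv y (cos (2 * r)) * (-(cos (2 * r) * 2) * 2)) r :=
    (hcomp hy.differentiable_deriv_two r).mul ((htwo r).sin.neg.mul_const 2)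
  have hcot : cot r * sin (2 * r) = 1 + cos (2 * r) := by
    rw [cot_eq_cos_div_sin, sin_two_mul, cos_two_mul]
    field_simp
    ring
  have htan : tan r * sin (2 * r) = 1 - cos (2 * r) := by
    rw [tan_eq_sin_div_cos, sin_two_mul, cos_two_mul, cos_sq']
    field_simp
    ring
  rw [hderiv, hderiv₂.deriv]
  linear_combination 4 * deriv (deriv y) (cos (2 * r)) * sin_sq (2 * r)
    - 2 * deriv y (cos (2 * r)) * ((2 * a + 1) * hcot - (2 * b + 1) * htan)

end Radial

/-- The radial factor `(cos r)^m P_k^{a,m+b}(cos 2r)` of a separated eigenfunction. -/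
noncomputable def hopfRadial (a b k m : ℕ) (r : ℝ) : ℝ :=
  cos r ^ m * (jacobiPoly ℝ k a (m + b)).eval (cos (2 * r))

theorem hopfRadial_ode (a b k m : ℕ) {r : ℝ} (hs : sin r ≠ 0) (hc : cos r ≠ 0) :
    deriv (deriv (hopfRadial a b k m)) r
        + ((2 * a + 1) * cot r - (2 * b + 1) * tan r) * deriv (hopfRadial a b k m) r
        - m * (m + 2 * b) * tan r ^ 2 * hopfRadial a b k m r
      = -(4 * k * (k + m + a + b + 1) + 2 * (a + 1) * m) * hopfRadial a b k m r := by
  set P := jacobiPoly ℝ k a (m + b) with hP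
  have hcont : ContDiff ℝ 2 fun x => P.eval x := by simpa using P.contDiff_aeval (𝕜 := ℝ) 2
  have hsmooth : ContDiff ℝ 2 fun ρ => P.eval (cos (2 * ρ)) := by fun_prop
  have hderiv : (deriv fun x => P.eval x) = fun x => P.derivative.eval x :=
    funext fun x => P.deriv
  have hode := congrArg (Polynomial.eval (cos (2 * r))) (jacobiPoly_ode (K := ℝ) k a (m + b))
  simp only [← hP, Function.iterate_succ_apply, Function.iterate_zero_apply, Nat.cast_add,
    Polynomial.eval_add, Polynomial.eval_mul, Polynomial.eval_sub, Polynomial.eval_one,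
    Polynomial.eval_pow, Polynomial.eval_X, Polynomial.eval_C, Polynomial.eval_neg] at hode
  have hpow := radial_laplacian_cos_pow_mul (a := a) (b := b) hsmooth m hs hc
  have hcomp := radial_laplacian_comp_cos_two_mul (a := a) (b := m + b) hcont hs hc
  rw [hderiv, Polynomial.deriv] at hcomp
  unfold hopfRadial
  linear_combination hpow + cos r ^ m * hcomp + 4 * cos r ^ m * hode

lemma hasDerivAt_intervalIntegral_of_continuous {E : Type*} [NormedAddCommGroup E]
    [NormedSpace ℝ E] {F F' : ℝ → ℝ → E}
    (hderiv : ∀ x t, HasDerivAt (fun x => F x t) (F' x t) x)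
    (hF : Continuous (Function.uncurry F)) (hF' : Continuous (Function.uncurry F'))
    (a b x₀ : ℝ) :
    HasDerivAt (fun x => ∫ t in a..b, F x t) (∫ t in a..b, F' x₀ t) x₀ := by
  obtain ⟨B, hB⟩ := ((isCompact_closedBall x₀ 1).prod isCompact_uIcc).exists_bound_of_continuousOn
    (hF'.continuousOn (s := Metric.closedBall x₀ 1 ×ˢ Set.uIcc a b))
  have hcont {G : ℝ → ℝ → E} (hG : Continuous (Function.uncurry G)) (x : ℝ) : Continuous (G x) :=
    hG.comp (Continuous.prodMk_right x)
  exact (intervalIntegral.hasDerivAt_integral_of_dominated_loc_of_deriv_le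
    (bound := fun _ => B) (Metric.closedBall_mem_nhds x₀ one_pos)
    (.of_forall fun x => (hcont hF x).aestronglyMeasurable)
    ((hcont hF x₀).intervalIntegrable _ _) (hcont hF' x₀).aestronglyMeasurable
    (.of_forall fun t ht x hx => hB (x, t) ⟨hx, Set.uIoc_subset_uIcc ht⟩)
    intervalIntegrable_const (.of_forall fun t _ x _ => hderiv x t)).2

/-- The argument `z(η, φ) = cos η + i sin η cos φ` of Laplace's integral for zonal spherical
functions. -/
noncomputable def laplaceArg (η φ : ℝ) : ℂ :=
  (cos η : ℂ) + Complex.I * ((sin η * cos φ : ℝ) : ℂ)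

lemma continuous_laplaceArg : Continuous (Function.uncurry laplaceArg) := by
  unfold Function.uncurry laplaceArg
  fun_prop

lemma hasDerivAt_laplaceArg (η φ : ℝ) :
    HasDerivAt (fun θ => laplaceArg θ φ) (laplaceArg (η + π / 2) φ) η := by
  have hsin := ((hasDerivAt_sin η).mul_const (cos φ)).ofReal_comp
  refine ((hasDerivAt_cos η).ofReal_comp.add (hsin.const_mul Complex.I)).congr_deriv ?_
  rw [laplaceArg, cos_add_pi_div_two, sin_add_pi_div_two]

lemma hasDerivAt_laplaceArg_add_pi_div_two (η φ : ℝ) :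
    HasDerivAt (fun θ => laplaceArg (θ + π / 2) φ) (-laplaceArg η φ) η := by
  refine ((hasDerivAt_laplaceArg (η + π / 2) φ).comp_add_const η (π / 2)).congr_deriv ?_
  rw [add_assoc, add_halves, laplaceArg, laplaceArg, cos_add_pi, sin_add_pi]
  push_cast
  ring

lemma hasDerivAt_laplaceArg_right (η φ : ℝ) :
    HasDerivAt (laplaceArg η) (-(Complex.I * sin η * sin φ)) φ := by
  have hcos := ((hasDerivAt_cos φ).const_mul (sin η)).ofReal_comp
  refine ((hcos.const_mul Complex.I).const_add (cos η : ℂ)).congr_deriv ?_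
  push_cast
  ring

lemma laplaceArg_add_pi_div_two_sq (η φ : ℝ) :
    laplaceArg (η + π / 2) φ ^ 2 = (sin φ : ℂ) ^ 2 - laplaceArg η φ ^ 2 := by
  rw [laplaceArg, laplaceArg, cos_add_pi_div_two, sin_add_pi_div_two]
  push_cast
  linear_combination Complex.cos φ ^ 2 * (Complex.cos η ^ 2 + Complex.sin η ^ 2) * Complex.I_sq
    + (1 - Complex.cos φ ^ 2) * Complex.sin_sq_add_cos_sq η - Complex.sin_sq_add_cos_sq φ

lemma cos_mul_laplaceArg_add_pi_div_two (η φ : ℝ) :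
    (cos η : ℂ) * laplaceArg (η + π / 2) φ
      = Complex.I * cos φ - sin η * laplaceArg η φ := by
  rw [laplaceArg, laplaceArg, cos_add_pi_div_two, sin_add_pi_div_two]
  push_cast
  linear_combination Complex.I * Complex.cos φ * Complex.sin_sq_add_cos_sq η

lemma continuous_laplaceArg_add_pi_div_two :
    Continuous (Function.uncurry fun η φ => laplaceArg (η + π / 2) φ) := by
  unfold Function.uncurry laplaceArg
  fun_prop

section LaplaceIntegral

open Polynomial

/-- Laplace's integral `∫₀^π Q(cos η + i sin η cos φ) sin^n φ dφ`; for `Q = X ^ m` it is a multiple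
of the zonal spherical function of degree `m` on the sphere of dimension `n + 2`. -/
noncomputable def laplaceIntegral (n : ℕ) (Q : ℂ[X]) (η : ℝ) : ℂ :=
  ∫ φ in (0 : ℝ)..π, Q.eval (laplaceArg η φ) * (sin φ : ℂ) ^ n

variable (n : ℕ) (Q : ℂ[X])

lemma continuous_eval_laplaceArg :
    Continuous (Function.uncurry fun η φ => Q.eval (laplaceArg η φ)) :=
  Q.continuous.comp continuous_laplaceArg

lemma continuous_sin_pow_right :
    Continuous (Function.uncurry fun _ φ : ℝ => (sin φ : ℂ) ^ n) := by
  unfold Function.uncurry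
  fun_prop

lemma hasDerivAt_eval_laplaceArg (η φ : ℝ) :
    HasDerivAt (fun θ => Q.eval (laplaceArg θ φ))
      ((derivative Q).eval (laplaceArg η φ) * laplaceArg (η + π / 2) φ) η :=
  (Q.hasDerivAt _).comp η (hasDerivAt_laplaceArg η φ)

lemma hasDerivAt_laplaceIntegral (η : ℝ) :
    HasDerivAt (laplaceIntegral n Q)
      (∫ φ in (0 : ℝ)..π, (derivative Q).eval (laplaceArg η φ) * laplaceArg (η + π / 2) φ
        * (sin φ : ℂ) ^ n) η :=
  hasDerivAt_intervalIntegral_of_continuous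
    (fun θ φ => (hasDerivAt_eval_laplaceArg Q θ φ).mul_const ((sin φ : ℂ) ^ n))
    ((continuous_eval_laplaceArg Q).mul (continuous_sin_pow_right n))
    (((continuous_eval_laplaceArg _).mul continuous_laplaceArg_add_pi_div_two).mul
      (continuous_sin_pow_right n)) 0 π η

lemma hasDerivAt_deriv_laplaceIntegral (η : ℝ) :
    HasDerivAt (deriv (laplaceIntegral n Q))
      (∫ φ in (0 : ℝ)..π, ((derivative (derivative Q)).eval (laplaceArg η φ)
          * laplaceArg (η + π / 2) φ * laplaceArg (η + π / 2) φ
        + (derivative Q).eval (laplaceArg η φ) * -laplaceArg η φ) * (sin φ : ℂ) ^ n) η := by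
  rw [funext fun θ => (hasDerivAt_laplaceIntegral n Q θ).deriv]
  have hQ' := continuous_eval_laplaceArg (derivative Q)
  have hQ'' := continuous_eval_laplaceArg (derivative (derivative Q))
  have hz := continuous_laplaceArg_add_pi_div_two
  exact hasDerivAt_intervalIntegral_of_continuous
    (fun θ φ => ((hasDerivAt_eval_laplaceArg (derivative Q) θ φ).mul
      (hasDerivAt_laplaceArg_add_pi_div_two θ φ)).mul_const ((sin φ : ℂ) ^ n))
    ((hQ'.mul hz).mul (continuous_sin_pow_right n))
    ((((hQ''.mul hz).mul hz).add (hQ'.mul continuous_laplaceArg.neg)).mul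
      (continuous_sin_pow_right n)) 0 π η

lemma hasDerivAt_eval_laplaceArg_mul_sin_pow {η : ℝ} (hs : sin η ≠ 0) (φ : ℝ) :
    HasDerivAt
      (fun φ => Complex.I / sin η * (Q.eval (laplaceArg η φ) * (sin φ : ℂ) ^ (n + 1)))
      ((derivative Q).eval (laplaceArg η φ) * (sin φ : ℂ) ^ (n + 2)
        + (n + 1) * Complex.I * cos φ / sin η * Q.eval (laplaceArg η φ) * (sin φ : ℂ) ^ n) φ := by
  have hs' : (sin η : ℂ) ≠ 0 := by exact_mod_cast hs
  have hQ := (Q.hasDerivAt _).comp φ (hasDerivAt_laplaceArg_right η φ)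
  refine ((hQ.mul ((hasDerivAt_sin φ).ofReal_comp.pow (n + 1))).const_mul _).congr_deriv ?_
  simp only [Nat.add_sub_cancel, Function.comp_apply, Pi.pow_apply, Nat.cast_add, Nat.cast_one]
  field_simp
  linear_combination -(derivative Q).eval (laplaceArg η φ) * sin η * (sin φ : ℂ) ^ (n + 2)
    * Complex.I_sq

theorem laplaceIntegral_ode {η : ℝ} (hs : sin η ≠ 0) :
    deriv (deriv (laplaceIntegral n Q)) η + (n + 1) * (cot η : ℂ) * deriv (laplaceIntegral n Q) η
      = -laplaceIntegral n
          (X ^ 2 * derivative (derivative Q) + C (n + 2 : ℂ) * X * derivative Q) η := by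
  have hs' : (sin η : ℂ) ≠ 0 := by exact_mod_cast hs
  have hcot : (cot η : ℂ) = cos η / sin η := by
    rw [cot_eq_cos_div_sin, Complex.ofReal_div]
  have hz (θ : ℝ) : Continuous (laplaceArg θ) :=
    continuous_laplaceArg.comp (Continuous.prodMk_right θ)
  have hint (f : ℝ → ℂ) (hf : Continuous f) : IntervalIntegrable f volume 0 π :=
    hf.intervalIntegrable _ _
  have hboundary := intervalIntegral.integral_eq_sub_of_hasDerivAt
    (fun φ _ => hasDerivAt_eval_laplaceArg_mul_sin_pow n (derivative Q) hs φ)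
    (hint _ (by fun_prop))
  rw [(hasDerivAt_deriv_laplaceIntegral n Q η).deriv, (hasDerivAt_laplaceIntegral n Q η).deriv,
    laplaceIntegral, ← sub_eq_zero, sub_neg_eq_add, ← intervalIntegral.integral_const_mul,
    ← intervalIntegral.integral_add (hint _ (by fun_prop))
      (hint _ (by fun_prop)),
    ← intervalIntegral.integral_add (hint _ (by fun_prop))
      (hint _ (by fun_prop))]
  convert hboundary using 1
  · refine intervalIntegral.integral_congr fun φ _ => ?_
    simp only [eval_add, eval_mul, eval_pow, eval_X, eval_C, hcot]
    have hd := laplaceArg_add_pi_div_two_sq η φ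
    have hcosd := cos_mul_laplaceArg_add_pi_div_two η φ
    generalize laplaceArg (η + π / 2) φ = d at *
    field_simp
    linear_combination (sin φ : ℂ) ^ n *
      (sin η * (derivative (derivative Q)).eval (laplaceArg η φ) * hd
        + (n + 1) * (derivative Q).eval (laplaceArg η φ) * hcosd)
  · simp

theorem laplaceIntegral_X_pow_ode (m : ℕ) {η : ℝ} (hs : sin η ≠ 0) :
    deriv (deriv (laplaceIntegral n (X ^ m))) η
        + (n + 1) * (cot η : ℂ) * deriv (laplaceIntegral n (X ^ m)) η
      = -(m * (m + n + 1)) * laplaceIntegral n (X ^ m) η := by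
  have heuler : X ^ 2 * derivative (derivative (X ^ m)) + C (n + 2 : ℂ) * X * derivative (X ^ m)
      = C (m * (m + n + 1) : ℂ) * X ^ m := by
    have hX (j : ℕ) : (X : ℂ[X]) * derivative (X ^ j) = C (j : ℂ) * X ^ j := by
      cases j with
      | zero => simp
      | succ j => simp only [derivative_X_pow, Nat.add_sub_cancel]; ring
    have hX₂ := congrArg (X * derivative ·) (hX m)
    simp only [derivative_mul, derivative_X, derivative_C] at hX₂
    simp only [map_add, map_mul, map_natCast, map_one, map_ofNat] at hX hX₂ ⊢
    linear_combination hX₂ + (m + n + 1) * hX m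
  rw [laplaceIntegral_ode n (X ^ m) hs, heuler, neg_mul, laplaceIntegral, laplaceIntegral,
    ← intervalIntegral.integral_const_mul]
  simp only [eval_mul, eval_C, mul_assoc]

end LaplaceIntegral

/-- The zonal spherical function of degree `m` on the sphere of dimension `n + 2`, normalized to be
`1` at `η = 0`. -/
noncomputable def sphericalFunction (n m : ℕ) (η : ℝ) : ℝ :=
  Gamma (n / 2 + 1) / (√π * Gamma ((n + 1) / 2)) *
    ∫ φ in (0 : ℝ)..π, (laplaceArg η φ ^ m).re * sin φ ^ n

lemma re_laplaceIntegral_X_pow (n m : ℕ) (η : ℝ) :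
    (laplaceIntegral n (Polynomial.X ^ m) η).re
      = ∫ φ in (0 : ℝ)..π, (laplaceArg η φ ^ m).re * sin φ ^ n := by
  have hint : IntervalIntegrable
      (fun φ => (Polynomial.X ^ m : Polynomial ℂ).eval (laplaceArg η φ) * (sin φ : ℂ) ^ n)
      volume 0 π := by
    refine Continuous.intervalIntegrable ?_ _ _
    unfold laplaceArg
    fun_prop
  refine (Complex.reCLM.intervalIntegral_comp_comm hint).symm.trans ?_
  simp only [Polynomial.eval_pow, Polynomial.eval_X, Complex.reCLM_apply, ← Complex.ofReal_pow,
    Complex.re_mul_ofReal]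

theorem sphericalFunction_ode (n m : ℕ) {η : ℝ} (hs : sin η ≠ 0) :
    deriv (deriv (sphericalFunction n m)) η
        + (n + 1) * cot η * deriv (sphericalFunction n m) η
      = -(m * (m + n + 1)) * sphericalFunction n m η := by
  set F := laplaceIntegral n (Polynomial.X ^ m) with hF
  have hsph : sphericalFunction n m = fun θ =>
      Gamma (n / 2 + 1) / (√π * Gamma ((n + 1) / 2)) * (F θ).re :=
    funext fun θ => by rw [hF, re_laplaceIntegral_X_pow, sphericalFunction]
  have hre {G : ℝ → ℂ} (hG : Differentiable ℝ G) :
      (deriv fun θ => (G θ).re) = fun θ => (deriv G θ).re :=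
    funext fun θ => (Complex.reCLM.hasFDerivAt.comp_hasDerivAt θ (hG θ).hasDerivAt).deriv
  have hF₁ : Differentiable ℝ F := fun θ => (hasDerivAt_laplaceIntegral n _ θ).differentiableAt
  have hF₂ : Differentiable ℝ (deriv F) :=
    fun θ => (hasDerivAt_deriv_laplaceIntegral n _ θ).differentiableAt
  have hode := congrArg Complex.re (laplaceIntegral_X_pow_ode n m hs)
  rw [← hF, show (n + 1) * (cot η : ℂ) = ((n + 1) * cot η : ℝ) by push_cast; rfl,
    show -(m * (m + n + 1) : ℂ) = (-(m * (m + n + 1)) : ℝ) by push_cast; rfl, Complex.add_re,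
    Complex.re_ofReal_mul, Complex.re_ofReal_mul] at hode
  simp only [hsph, deriv_const_mul_field', hre hF₁, hre hF₂]
  linear_combination Gamma (n / 2 + 1) / (√π * Gamma ((n + 1) / 2)) * hode

lemma hOct_eq_sphericalFunction (m : ℕ) : hOct m = sphericalFunction 5 m := by
  funext η
  rw [hOct, sphericalFunction]
  norm_num [laplaceArg]

/-- The separated solution `e^{-(4k(k+m+a+b+2)+2(a+1)m)t} (cos r)^m P_k^{a,m+b+1}(cos 2r) h_m(η)`
of the radial sub-Laplacian heat equation of a Hopf fibration with fibre the sphere of dimension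
`2 * b + 3`: `b = 0`, `a = 2 * n - 1` for the quaternionic fibration over the projective space of
quaternionic dimension `n`, and `b = 2`, `a = 3` for the octonionic one. -/
noncomputable def hopfEigenfunction (a b k m : ℕ) (t r η : ℝ) : ℝ :=
  exp (-(4 * k * (k + m + a + b + 2) + 2 * (a + 1) * m) * t) *
    hopfRadial a (b + 1) k m r * sphericalFunction (2 * b + 1) m η

theorem uEig_heat_equation_general (a b k m : ℕ) (t : ℝ) {r η : ℝ} (hsr : sin r ≠ 0)
    (hcr : cos r ≠ 0) (hsη : sin η ≠ 0) :
    deriv (fun s => hopfEigenfunction a b k m s r η) t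
      = deriv (deriv fun ρ => hopfEigenfunction a b k m t ρ η) r
        + ((2 * a + 1) * cot r - (2 * b + 3) * tan r)
          * deriv (fun ρ => hopfEigenfunction a b k m t ρ η) r
        + tan r ^ 2 * (deriv (deriv fun θ => hopfEigenfunction a b k m t r θ) η
          + (2 * b + 2) * cot η * deriv (fun θ => hopfEigenfunction a b k m t r θ) η) := by
  have hexp (c : ℝ) : deriv (fun s => exp (c * s)) t = c * exp (c * t) := by
    simpa [mul_comm] using ((hasDerivAt_id t).const_mul c).exp.deriv
  have hradial := hopfRadial_ode a (b + 1) k m hsr hcr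
  have hspherical := sphericalFunction_ode (2 * b + 1) m hsη
  push_cast at hradial hspherical
  simp only [hopfEigenfunction, deriv_mul_const_field', deriv_const_mul_field', hexp]
  set E := exp (-(4 * k * (k + m + a + b + 2) + 2 * (a + 1) * m) * t)
  linear_combination -E * sphericalFunction (2 * b + 1) m η * hradial
    - E * tan r ^ 2 * hopfRadial a (b + 1) k m r * hspherical

lemma uEig_eq_hopfEigenfunction (k m : ℕ) : uEig k m = hopfEigenfunction 3 2 k m := by
  funext t r η
  rw [uEig, hopfEigenfunction, hopfRadial, jacP_eq_jacobiPoly, hOct_eq_sphericalFunction]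
  push_cast
  ring_nf

/-- `u` satisfies the heat equation of the radial part of the sub-Laplacian of the octonionic
Hopf fibration; i.e. `(cos r)^m P_k^{3,m+3}(cos 2r) h_m(η)` is an eigenfunction of the radial
sub-Laplacian with eigenvalue `-4(k(k+m+7)+2m)`. -/
theorem uEig_heat_equation (k m : ℕ) (t r η : ℝ) (ht : 0 < t)
    (hr : r ∈ Set.Ioo 0 (π / 2)) (hη : η ∈ Set.Ioo 0 π) :
    deriv (fun s => uEig k m s r η) t
      = deriv (deriv (fun ρ => uEig k m t ρ η)) r
        + (7 * Real.cot r - 7 * Real.tan r) * deriv (fun ρ => uEig k m t ρ η) r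
        + Real.tan r ^ 2 *
            (deriv (deriv (fun θ => uEig k m t r θ)) η
              + 6 * Real.cot η * deriv (fun θ => uEig k m t r θ) η) := by
  have hsr : sin r ≠ 0 := (sin_pos_of_pos_of_lt_pi hr.1 (by linarith [hr.2, pi_pos])).ne'
  have hcr : cos r ≠ 0 := (cos_pos_of_mem_Ioo ⟨by linarith [hr.1, pi_pos], hr.2⟩).ne'
  have hsη : sin η ≠ 0 := (sin_pos_of_mem_Ioo hη).ne'
  have hheat := uEig_heat_equation_general 3 2 k m t hsr hcr hsη
  simp only [uEig_eq_hopfEigenfunction]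
  linear_combination hheat
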